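/- Let (𝒜,c) be a trigonometric ∨-system in V = ℂ^N, W ⊆ V* a linear subspace, B = 𝒜 ∩ W a subsystem with span(B) = W, M(v) = Σ_{β∈B} c_β β(v) β^∨, and W^∨ = span{β^∨ : β ∈ B}. Suppose B is non-isotropic. If v ∈ W^∨ satisfies M(v) = λ v for some λ ∈ ℂ, then G_B(u,v) = λ·G_𝒜(u,v) for all u ∈ V. Moreover, every eigenvalue of the restriction of M to W^∨ is nonzero. -/

import Mathlib

open scoped Classical
open Finset

noncomputable section

/-- Evaluation of a covector `α` on a vector `x` in `ℂ^N`. -/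
def ev {N : ℕ} (α x : Fin N → ℂ) : ℂ := ∑ i, α i * x i

/-- The bilinear form `G_𝒜` associated to a configuration. -/
def Gform {N : ℕ} (A : Finset (Fin N → ℂ)) (c : (Fin N → ℂ) → ℂ)
    (u v : Fin N → ℂ) : ℂ :=
  ∑ α ∈ A, c α * ev α u * ev α v

/-- `(α ∧ β)(a, b) = α(a)β(b) - α(b)β(a)`. -/
def wedge {N : ℕ} (α β a b : Fin N → ℂ) : ℂ :=
  ev α a * ev β b - ev α b * ev β a

/-- Non-degeneracy of `G_𝒜`. -/
def Nondeg {N : ℕ} (A : Finset (Fin N → ℂ)) (c : (Fin N → ℂ) → ℂ) : Prop :=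
  ∀ u : Fin N → ℂ, (∀ v : Fin N → ℂ, Gform A c u v = 0) → u = 0

/-- `dual` assigns to each covector `γ ∈ 𝒜` its `G_𝒜`-dual vector `γ^∨`. -/
def IsDual {N : ℕ} (A : Finset (Fin N → ℂ)) (c : (Fin N → ℂ) → ℂ)
    (dual : (Fin N → ℂ) → Fin N → ℂ) : Prop :=
  ∀ γ ∈ A, ∀ v : Fin N → ℂ, Gform A c (dual γ) v = ev γ v

/-- `γ` is proportional to `α`. -/
def Collin {N : ℕ} (α γ : Fin N → ℂ) : Prop := ∃ t : ℂ, γ = t • α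

/-- `γ₁ ∼ γ₂` iff `γ₁ + γ₂` or `γ₁ - γ₂` is an integer multiple of `α`. -/
def SeriesRel {N : ℕ} (α γ₁ γ₂ : Fin N → ℂ) : Prop :=
  ∃ m : ℤ, γ₁ + γ₂ = (m : ℂ) • α ∨ γ₁ - γ₂ = (m : ℂ) • α

/-- `Γ` is an (maximal) `α`-series of the configuration `A`. -/
def IsSeries {N : ℕ} (A : Finset (Fin N → ℂ)) (α : Fin N → ℂ)
    (Γ : Finset (Fin N → ℂ)) : Prop :=
  Γ.Nonempty ∧ (∀ γ ∈ Γ, γ ∈ A ∧ ¬ Collin α γ) ∧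
    (∀ γ₁ ∈ Γ, ∀ γ₂ ∈ Γ, SeriesRel α γ₁ γ₂) ∧
    (∀ β ∈ A, ¬ Collin α β → (∃ γ ∈ Γ, SeriesRel α β γ) → β ∈ Γ)

/-- The trigonometric ∨-conditions. -/
def IsTrigVSystem {N : ℕ} (A : Finset (Fin N → ℂ)) (c : (Fin N → ℂ) → ℂ)
    (dual : (Fin N → ℂ) → Fin N → ℂ) : Prop :=
  ∀ α ∈ A, ∀ Γ : Finset (Fin N → ℂ), IsSeries A α Γ →
    ∀ a b : Fin N → ℂ, ∑ β ∈ Γ, c β * ev α (dual β) * wedge α β a b = 0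

/-- The form `G^{(1)}_𝒜` evaluated at `(u, v)`. -/
def G1form {N : ℕ} (A : Finset (Fin N → ℂ)) (c : (Fin N → ℂ) → ℂ)
    (u v : Fin N → ℂ) : ℂ :=
  ∑ α ∈ A, ∑ β ∈ A, c α * c β * wedge α β u v ^ 2

/-- The form `G^{(2)}_𝒜` evaluated at `(u, v)`. -/
def G2form {N : ℕ} (A : Finset (Fin N → ℂ)) (c : (Fin N → ℂ) → ℂ)
    (dual : (Fin N → ℂ) → Fin N → ℂ) (u v : Fin N → ℂ) : ℂ :=
  ∑ α ∈ A, ∑ β ∈ A,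
    c α * c β * Gform A c (dual α) (dual β) * wedge α β u v ^ 2

/-- Complex cotangent. -/
def ccot (z : ℂ) : ℂ := Complex.cos z / Complex.sin z

/-- The matrix `F_i(x)` of third derivatives of the prepotential, `1 ≤ i ≤ N`. -/
def Fmat {N : ℕ} (A : Finset (Fin N → ℂ)) (c : (Fin N → ℂ) → ℂ) (lam : ℂ)
    (i : Fin N) (x : Fin N → ℂ) : Matrix (Fin N ⊕ Unit) (Fin N ⊕ Unit) ℂ :=
  Matrix.of fun p q =>
    match p, q with
    | Sum.inl p, Sum.inl q => lam * ∑ α ∈ A, c α * α i * α p * α q * ccot (ev α x)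
    | Sum.inl p, Sum.inr _ => 2 * ∑ α ∈ A, c α * α i * α p
    | Sum.inr _, Sum.inl q => 2 * ∑ α ∈ A, c α * α i * α q
    | Sum.inr _, Sum.inr _ => 0

/-- The constant matrix `F_{N+1}`. -/
def Flast {N : ℕ} (A : Finset (Fin N → ℂ)) (c : (Fin N → ℂ) → ℂ) :
    Matrix (Fin N ⊕ Unit) (Fin N ⊕ Unit) ℂ :=
  Matrix.of fun p q =>
    match p, q with
    | Sum.inl p, Sum.inl q => 2 * ∑ α ∈ A, c α * α p * α q
    | Sum.inr _, Sum.inr _ => 2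
    | _, _ => 0

/-- `(𝒜, c, λ)` satisfies the trigonometric WDVV equations. -/
def SatisfiesWDVV {N : ℕ} (A : Finset (Fin N → ℂ)) (c : (Fin N → ℂ) → ℂ)
    (lam : ℂ) : Prop :=
  IsUnit (Flast A c) ∧
    ∀ x : Fin N → ℂ, (∀ α ∈ A, Complex.sin (ev α x) ≠ 0) →
      ∀ i j : Fin N,
        Fmat A c lam i x * (Flast A c)⁻¹ * Fmat A c lam j x =
          Fmat A c lam j x * (Flast A c)⁻¹ * Fmat A c lam i x

/-- The covectors of `𝒜` lie in a lattice of full rank `N` in `(ℂ^N)^*`. -/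
def InLattice {N : ℕ} (A : Finset (Fin N → ℂ)) : Prop :=
  ∃ L : Fin N → Fin N → ℂ, LinearIndependent ℂ L ∧
    ∀ α ∈ A, ∃ m : Fin N → ℤ, α = ∑ i, (m i : ℂ) • L i

/-- No two covectors of `𝒜` are negatively proportional. -/
def PositiveSystem {N : ℕ} (A : Finset (Fin N → ℂ)) : Prop :=
  ∀ α ∈ A, ∀ t : ℝ, t < 0 → (t : ℂ) • α ∉ A

/-- The operator `M(v) = Σ_{β ∈ B} c_β β(v) β^∨`. -/
def Mop {N : ℕ} (B : Finset (Fin N → ℂ)) (c : (Fin N → ℂ) → ℂ)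
    (dual : (Fin N → ℂ) → Fin N → ℂ) (v : Fin N → ℂ) : Fin N → ℂ :=
  ∑ β ∈ B, (c β * ev β v) • dual β

/-- `W^∨ = span{β^∨ : β ∈ B}`. -/
def Wdual {N : ℕ} (B : Finset (Fin N → ℂ))
    (dual : (Fin N → ℂ) → Fin N → ℂ) : Submodule ℂ (Fin N → ℂ) :=
  Submodule.span ℂ (dual '' (B : Set (Fin N → ℂ)))

/-- `B` is non-isotropic: the restriction of `G_B` to `W^∨` is non-degenerate. -/
def NonIsotropic {N : ℕ} (B : Finset (Fin N → ℂ)) (c : (Fin N → ℂ) → ℂ)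
    (dual : (Fin N → ℂ) → Fin N → ℂ) : Prop :=
  ∀ u ∈ Wdual B dual, (∀ v ∈ Wdual B dual, Gform B c u v = 0) → u = 0
/-- for a non-isotropic subsystem, eigenvectors of `M` in `W^∨` satisfy
`G_B(u,v) = λ·G_𝒜(u,v)`, and all eigenvalues of `M|_{W^∨}` are nonzero. -/
theorem subsystem_eigenvalue_properties {N : ℕ}
    (A : Finset (Fin N → ℂ)) (c : (Fin N → ℂ) → ℂ)
    (dual : (Fin N → ℂ) → Fin N → ℂ)
    (hA0 : ∀ α ∈ A, α ≠ (0 : Fin N → ℂ))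
    (hnd : Nondeg A c)
    (hdual : IsDual A c dual)
    (hvsys : IsTrigVSystem A c dual)
    (W : Submodule ℂ (Fin N → ℂ)) (B : Finset (Fin N → ℂ))
    (hB : ∀ α : Fin N → ℂ, α ∈ B ↔ α ∈ A ∧ α ∈ W)
    (hWspan : W = Submodule.span ℂ (B : Set (Fin N → ℂ)))
    (hiso : NonIsotropic B c dual) :
    ∀ v ∈ Wdual B dual, ∀ μ : ℂ, Mop B c dual v = μ • v →
      (∀ u : Fin N → ℂ, Gform B c u v = μ * Gform A c u v) ∧ (v ≠ 0 → μ ≠ 0) := by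
  intro v hv μ hM
  have hadd : ∀ a x y : Fin N → ℂ, ev a (x + y) = ev a x + ev a y := by
    intro a x y
    simp [ev, mul_add, Finset.sum_add_distrib]
  have hsmul : ∀ (a : Fin N → ℂ) (t : ℂ) (x : Fin N → ℂ), ev a (t • x) = t * ev a x := by
    intro a t x
    simp only [ev, Finset.mul_sum, Pi.smul_apply, smul_eq_mul]
    exact Finset.sum_congr rfl fun i _ => by ring
  have hsymm : ∀ (S : Finset (Fin N → ℂ)) (x y : Fin N → ℂ),
      Gform S c x y = Gform S c y x := by
    intro S x y
    exact Finset.sum_congr rfl fun i _ => by ring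
  let L : (Fin N → ℂ) → (Fin N → ℂ) →ₗ[ℂ] ℂ := fun u =>
    { toFun := fun x => Gform A c u x
      map_add' := by
        intro x y
        simp only [Gform, hadd, mul_add, Finset.sum_add_distrib]
      map_smul' := by
        intro t x
        simp only [Gform, hsmul, Finset.mul_sum, RingHom.id_apply, smul_eq_mul]
        exact Finset.sum_congr rfl fun i _ => by ring }
  have key : ∀ u : Fin N → ℂ, Gform B c u v = μ * Gform A c u v := by
    intro u
    have h1 : L u (Mop B c dual v) = Gform B c u v := by
      simp only [Mop, map_sum, map_smul, smul_eq_mul, Gform]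
      refine Finset.sum_congr rfl fun β hβ => ?_
      have h2 : L u (dual β) = ev β u :=
        (hsymm A u (dual β)).trans (hdual β ((hB β).1 hβ).1 u)
      rw [h2]
      ring
    rw [← h1, hM, map_smul, smul_eq_mul]
    rfl
  refine ⟨key, fun hv0 hμ => hv0 (hiso v hv fun w _ => ?_)⟩
  rw [hsymm, key, hμ, zero_mul]

end
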